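/- Let k be an algebraically closed field of characteristic 2 and ζ ∈ k a primitive cube root of unity. Let G = A₄ = ⟨σ, ρ : σ² = ρ³ = (σρ)³ = 1⟩, set τ := ρσρ⁻¹, and let H = ⟨σ, τ⟩ be the unique Sylow 2-subgroup of G. For n ≥ 1 let V₀ be the 2n-dimensional representation of H over k given in block form by σ ↦ [[I_n, ζ(I_n + J_n(0))], [0, I_n]] and τ ↦ [[I_n, ζ²I_n + J_n(0)], [0, I_n]]. Then there exist representations W₀, W₁, W₂ of G over k such that Ind_H^G V₀ ≅ W₀ ⊕ W₁ ⊕ W₂ as representations of G, and Res_H^G W_i ≅ V₀ as representations of H for each i = 0, 1, 2. -/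

import Mathlib

/-- The `n × n` upper-triangular Jordan block over `k` with eigenvalue `lam`. -/
def jordanBlock (k : Type) [Field k] (n : ℕ) (lam : k) : Matrix (Fin n) (Fin n) k :=
  Matrix.of fun i j => if i = j then lam else if (i : ℕ) + 1 = (j : ℕ) then 1 else 0

open Matrix in
/-- The diagonal matrix of powers of `ζ⁻¹ = ζ ^ 2` commutes with the nilpotent Jordan block up to
the scalar `ζ`. -/
theorem diagonal_mul_jordanBlock {k : Type} [Field k] {ζ : k} (hζ : ζ ^ 3 = 1) (n : ℕ) :
    diagonal (fun i : Fin n => ζ ^ (2 * (i : ℕ))) * jordanBlock k n 0 =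
      ζ • (jordanBlock k n 0 * diagonal (fun i : Fin n => ζ ^ (2 * (i : ℕ)))) := by
  ext i j
  rw [diagonal_mul, Matrix.smul_apply, mul_diagonal, jordanBlock, of_apply, smul_eq_mul]
  split_ifs with h1 h2
  · simp
  · rw [← h2, mul_add, pow_add]
    linear_combination (-ζ ^ (2 * (i : ℕ))) * hζ
  · simp

/-- The order-three block matrix extending the action of the Klein four group to `A₄`. -/
def rotationMatrix {k : Type} [Field k] (ζ : k) (n : ℕ) :
    Matrix (Fin n ⊕ Fin n) (Fin n ⊕ Fin n) k :=
  Matrix.fromBlocks (ζ • Matrix.diagonal fun i : Fin n => ζ ^ (2 * (i : ℕ))) 0 0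
    (Matrix.diagonal fun i : Fin n => ζ ^ (2 * (i : ℕ)))

theorem rotationMatrix_pow_three {k : Type} [Field k] {ζ : k} (hζ : ζ ^ 3 = 1) (n : ℕ) :
    rotationMatrix ζ n ^ 3 = 1 := by
  have hQ : (Matrix.diagonal fun i : Fin n => ζ ^ (2 * (i : ℕ))) ^ 3 = 1 := by
    rw [Matrix.diagonal_pow, ← Matrix.diagonal_one]
    congr 1
    ext i
    rw [Pi.pow_apply, ← pow_mul, mul_comm, pow_mul, hζ, one_pow]
  rw [rotationMatrix, Matrix.fromBlocks_diagonal_pow, smul_pow, hζ, hQ, one_smul,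
    Matrix.fromBlocks_one]

theorem rotationMatrix_mul_unipotent {k : Type} [Field k] (ζ : k) (n : ℕ)
    {A B : Matrix (Fin n) (Fin n) k}
    (h : (ζ • Matrix.diagonal fun i : Fin n => ζ ^ (2 * (i : ℕ))) * A =
      B * Matrix.diagonal fun i : Fin n => ζ ^ (2 * (i : ℕ))) :
    rotationMatrix ζ n * Matrix.fromBlocks 1 A 0 1 =
      Matrix.fromBlocks 1 B 0 1 * rotationMatrix ζ n := by
  simp [rotationMatrix, Matrix.fromBlocks_multiply, ← h]

/-- If each operator of a representation preserves the range of an injective map, the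
representation pulls back along that map. -/
theorem Representation.exists_of_injective {k G V W : Type} [Field k] [Group G]
    [AddCommGroup V] [Module k V] [AddCommGroup W] [Module k W] (U : Representation k G W)
    (φ : V →ₗ[k] W) (hφ : Function.Injective φ)
    (h : ∀ g, ∃ T : V →ₗ[k] V, ∀ v, U g (φ v) = φ (T v)) :
    ∃ X : Representation k G V, ∀ g v, U g (φ v) = φ (X g v) := by
  choose T hT using h
  refine ⟨⟨⟨T, ?_⟩, ?_⟩, hT⟩
  · ext v
    apply hφ
    rw [← hT]
    simp
  · intro a b
    ext v
    apply hφ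
    rw [← hT]
    simp [hT]

theorem Representation.exists_equiv_of_closure {k G V W : Type} [Field k] [Group G]
    [AddCommGroup V] [Module k V] [AddCommGroup W] [Module k W] (U : Representation k G W)
    (φ : V →ₗ[k] W) {s : Set G}
    (hs : ∀ g ∈ s, ∃ T : V ≃ₗ[k] V, ∀ v, U g (φ v) = φ (T v)) {g : G}
    (hg : g ∈ Subgroup.closure s) : ∃ T : V ≃ₗ[k] V, ∀ v, U g (φ v) = φ (T v) := by
  induction hg using Subgroup.closure_induction with
  | mem x hx => exact hs x hx
  | one => exact ⟨LinearEquiv.refl k V, fun v => by simp⟩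
  | mul a b _ _ ha hb =>
    obtain ⟨A, hA⟩ := ha
    obtain ⟨B, hB⟩ := hb
    exact ⟨B.trans A, fun v => by simp [hA, hB]⟩
  | inv a _ ha =>
    obtain ⟨A, hA⟩ := ha
    refine ⟨A.symm, fun v => ?_⟩
    have := hA (A.symm v)
    rw [LinearEquiv.apply_symm_apply] at this
    rw [← this, Representation.inv_self_apply]

/-- A map intertwining a generating set intertwines the two representations. -/
theorem Representation.intertwines_of_closure {k G V W : Type} [Field k] [Group G]
    [AddCommGroup V] [Module k V] [AddCommGroup W] [Module k W] (U : Representation k G W)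
    (φ : V →ₗ[k] W) {s : Set G} {H : Subgroup G} (hH : H = Subgroup.closure s)
    (X : Representation k H V)
    (hs : ∀ g (hg : g ∈ H), g ∈ s → ∀ v, U g (φ v) = φ (X ⟨g, hg⟩ v)) (h : H) (v : V) :
    U h (φ v) = φ (X h v) := by
  subst hH
  obtain ⟨g, hg⟩ := h
  induction hg using Subgroup.closure_induction generalizing v with
  | mem x hx => exact hs x _ hx v
  | one =>
    have : (⟨1, one_mem _⟩ : Subgroup.closure s) = 1 := rfl
    simp [this]
  | mul a b ha hb iha ihb =>
    have : (⟨a * b, mul_mem ha hb⟩ : Subgroup.closure s) = ⟨a, ha⟩ * ⟨b, hb⟩ := rfl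
    rw [this, map_mul, Module.End.mul_apply, ← iha, ← ihb, ← Module.End.mul_apply, ← map_mul,
      Subgroup.coe_mul]
  | inv a ha iha =>
    have : (⟨a⁻¹, inv_mem ha⟩ : Subgroup.closure s) = ⟨a, ha⟩⁻¹ := rfl
    have h1 := iha (X ⟨a, ha⟩⁻¹ v)
    rw [Representation.self_inv_apply] at h1
    rw [this, ← h1, Subgroup.coe_inv, Representation.inv_self_apply]

/-- An internal direct sum of the ranges of injective maps is an external direct sum. -/
theorem DirectSum.IsInternal.exists_equiv_of_range {k κ V W : Type} [Field k] [Fintype κ]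
    [DecidableEq κ] [AddCommGroup V] [Module k V] [AddCommGroup W] [Module k W]
    (φ : κ → V →ₗ[k] W) (hφ : ∀ i, Function.Injective (φ i))
    (h : DirectSum.IsInternal fun i => LinearMap.range (φ i)) :
    ∃ e : (κ → V) ≃ₗ[k] W, ∀ f, e f = ∑ i, φ i (f i) := by
  let e := LinearEquiv.piCongrRight (fun i => LinearEquiv.ofInjective (φ i) (hφ i)) ≪≫ₗ
    (DirectSum.linearEquivFunOnFintype k κ fun i => LinearMap.range (φ i)).symm ≪≫ₗ
    LinearEquiv.ofBijective (DirectSum.coeLinearMap fun i => LinearMap.range (φ i)) h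
  refine ⟨e, fun f => ?_⟩
  have : e.toLinearMap = ∑ i, φ i ∘ₗ LinearMap.proj i := by
    refine LinearMap.pi_ext fun i v => ?_
    have h1 : LinearEquiv.piCongrRight (fun i => LinearEquiv.ofInjective (φ i) (hφ i))
        (Pi.single i v) = Pi.single i (LinearEquiv.ofInjective (φ i) (hφ i) v) := by
      ext j
      by_cases hj : j = i
      · subst hj; simp
      · simp [hj]
    rw [LinearMap.sum_apply, Finset.sum_eq_single i]
    · simp only [e, LinearEquiv.coe_coe, LinearEquiv.trans_apply, h1,
        DirectSum.linearEquivFunOnFintype_symm_single]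
      erw [DirectSum.coeLinearMap_lof]
      simp
    · intro j _ hj
      simp [hj]
    · simp
  simpa using LinearMap.congr_fun this f

/-- The twisted embedding of `V` into the induced module, attached to a cube root of unity `c`
and an operator `R` of order three. -/
def twistedEmbedding {k V W : Type} [Field k] [AddCommGroup V] [Module k V] [AddCommGroup W]
    [Module k W] (P : Module.End k W) (ι : V →ₗ[k] W) (R : Module.End k V) (c : k) :
    V →ₗ[k] W :=
  ι + c ^ 2 • (P ∘ₗ ι ∘ₗ R ∘ₗ R) + c • (P ∘ₗ P ∘ₗ ι ∘ₗ R)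

theorem twistedEmbedding_apply {k V W : Type} [Field k] [AddCommGroup V] [Module k V]
    [AddCommGroup W] [Module k W] (P : Module.End k W) (ι : V →ₗ[k] W) (R : Module.End k V)
    (c : k) (v : V) :
    twistedEmbedding P ι R c v = ι v + c ^ 2 • P (ι (R (R v))) + c • P (P (ι (R v))) :=
  rfl

/-- The sum of the three twisted embeddings is an isomorphism. -/
theorem exists_equiv_twistedEmbedding {k V W : Type} [Field k] [CharP k 2] {ζ : k}
    (hζ : 1 + ζ + ζ ^ 2 = 0) [AddCommGroup V] [Module k V] [FiniteDimensional k V]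
    [AddCommGroup W] [Module k W]
    (P : Module.End k W) (ι : V →ₗ[k] W) (R : Module.End k V) (hR : ∀ v, R (R (R v)) = v)
    (e₀ : (Fin 3 → V) ≃ₗ[k] W) (he₀ : ∀ f, e₀ f = ι (f 0) + P (ι (f 1)) + P (P (ι (f 2)))) :
    ∃ e : (Fin 3 → V) ≃ₗ[k] W,
      ∀ f, e f = ∑ j : Fin 3, twistedEmbedding P ι R (ζ ^ (j : ℕ)) (f j) := by
  have h2 : (2 : k) = 0 := CharP.ofNat_eq_zero k 2
  let p : Fin 3 → (Fin 3 → V) →ₗ[k] V := LinearMap.proj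
  let L : Module.End k (Fin 3 → V) := LinearMap.pi
    ![p 0 + p 1 + p 2, R ∘ₗ R ∘ₗ (p 0 + ζ ^ 2 • p 1 + ζ • p 2),
      R ∘ₗ (p 0 + ζ • p 1 + ζ ^ 2 • p 2)]
  have hL : Function.Injective L := by
    rw [← LinearMap.ker_eq_bot, LinearMap.ker_eq_bot']
    intro f hf
    have e0 : f 0 + f 1 + f 2 = 0 := congrFun hf 0
    have e1 : R (R (f 0 + ζ ^ 2 • f 1 + ζ • f 2)) = 0 := congrFun hf 1
    have e2 : R (f 0 + ζ • f 1 + ζ ^ 2 • f 2) = 0 := congrFun hf 2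
    replace e1 : f 0 + ζ ^ 2 • f 1 + ζ • f 2 = 0 := by rw [← hR (_ + _), e1, map_zero]
    replace e2 : f 0 + ζ • f 1 + ζ ^ 2 • f 2 = 0 := by
      rw [← hR (_ + _), e2, map_zero, map_zero]
    have h0 : f 0 = 0 := by
      linear_combination (norm := module) e0 + e1 + e2 - h2 • f 0 - hζ • f 1 - hζ • f 2
    have h1 : f 1 = 0 := by
      linear_combination (norm := module) e0 + ζ • e1 + ζ ^ 2 • e2 - hζ • f 0
        - (ζ ^ 3 * h2) • f 1 - ((1 - ζ + ζ ^ 2) * hζ) • f 2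
    have h3 : f 2 = 0 := by
      rw [h0, h1] at e0; simpa using e0
    ext j : 1
    fin_cases j <;> simp [h0, h1, h3]
  refine ⟨LinearEquiv.ofInjectiveEndo L hL ≪≫ₗ e₀, fun f => ?_⟩
  have hζ3 : ζ ^ 3 = 1 := by linear_combination (ζ - 1) * hζ
  have hζ4 : (ζ ^ 2) ^ 2 = ζ := by linear_combination ζ * hζ3
  have l0 : L f 0 = f 0 + f 1 + f 2 := rfl
  have l1 : L f 1 = R (R (f 0 + ζ ^ 2 • f 1 + ζ • f 2)) := rfl
  have l2 : L f 2 = R (f 0 + ζ • f 1 + ζ ^ 2 • f 2) := rfl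
  rw [LinearEquiv.trans_apply, LinearEquiv.coe_ofInjectiveEndo, he₀, l0, l1, l2]
  simp only [Fin.sum_univ_three, twistedEmbedding_apply, map_add, map_smul, Fin.val_zero,
    Fin.val_one, Fin.val_two, pow_zero, pow_one, one_pow, one_smul, hζ4]
  abel

/-- **Lemma.** Let `G = A₄ = ⟨σ, ρ⟩`, `τ = ρσρ⁻¹`, `H = ⟨σ, τ⟩` its Sylow 2-subgroup,
and let `V₀` be the `2n`-dimensional representation of `H` given by the stated block
matrices (the case `φ = 0`).  Then the induced representation `Ind_H^G V₀` — encoded by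
a `G`-representation `U` with an injective `H`-equivariant embedding of `V₀` whose three
`ρ`-translates form an internal direct sum — decomposes as `W₀ ⊕ W₁ ⊕ W₂` for
`G`-representations `W₀, W₁, W₂` each of whose restrictions to `H` is isomorphic
to `V₀`. -/
theorem stmt_14 (k : Type) [Field k] [IsAlgClosed k] [CharP k 2]
    (ζ : k) (hζ : IsPrimitiveRoot ζ 3)
    (G : Type) [Group G] (σ ρ : G)
    (hσ : σ ^ 2 = 1) (hρ : ρ ^ 3 = 1) (hσρ : (σ * ρ) ^ 3 = 1)
    (hcard : Nat.card G = 12) (hgen : Subgroup.closure {σ, ρ} = ⊤)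
    (τ : G) (hτ : τ = ρ * σ * ρ⁻¹)
    (H : Subgroup G) (hH : H = Subgroup.closure {σ, τ})
    (hσH : σ ∈ H) (hτH : τ ∈ H)
    (n : ℕ) (hn : 1 ≤ n)
    -- the representation V₀ of H
    (V0 : Representation k ↥H (Fin n ⊕ Fin n → k))
    (hV0σ : V0 ⟨σ, hσH⟩ =
      Matrix.toLin' (Matrix.fromBlocks 1 (ζ • (1 + jordanBlock k n 0)) 0 1))
    (hV0τ : V0 ⟨τ, hτH⟩ =
      Matrix.toLin' (Matrix.fromBlocks 1
        (ζ ^ 2 • (1 : Matrix (Fin n) (Fin n) k) + jordanBlock k n 0) 0 1))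
    -- a G-representation U realizing Ind_H^G V₀
    (W : Type) [AddCommGroup W] [Module k W]
    (U : Representation k G W)
    (ι : (Fin n ⊕ Fin n → k) →ₗ[k] W)
    (hinj : Function.Injective ι)
    (hequiv : ∀ (h : ↥H) (v : Fin n ⊕ Fin n → k), ι (V0 h v) = U (h : G) (ι v))
    (hint : DirectSum.IsInternal fun i : Fin 3 =>
      Submodule.map (U ρ ^ (i : ℕ)) (LinearMap.range ι)) :
    -- conclusion: Ind_H^G V₀ ≅ W₀ ⊕ W₁ ⊕ W₂ with Res_H^G Wᵢ ≅ V₀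
    ∃ Wr : Fin 3 → Representation k G (Fin n ⊕ Fin n → k),
      (∃ e : W ≃ₗ[k] (Fin 3 → (Fin n ⊕ Fin n → k)),
        ∀ (g : G) (w : W) (i : Fin 3), e (U g w) i = Wr i g (e w i)) ∧
      ∀ i : Fin 3,
        ∃ e' : (Fin n ⊕ Fin n → k) ≃ₗ[k] (Fin n ⊕ Fin n → k),
          ∀ (h : ↥H) (v : Fin n ⊕ Fin n → k), e' (Wr i (h : G) v) = V0 h (e' v) := by
  have hζ3 : ζ ^ 3 = 1 := hζ.pow_eq_one
  have h2 : (2 : k) = 0 := CharP.ofNat_eq_zero k 2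
  have hζs : 1 + ζ + ζ ^ 2 = 0 := by
    have := hζ.geom_sum_eq_zero (by norm_num)
    simpa [Finset.sum_range_succ] using this
  -- relations in the group
  have hσσ : σ * σ = 1 := by rw [← pow_two, hσ]
  have hσi : σ⁻¹ = σ := inv_eq_of_mul_eq_one_left hσσ
  have hρi : ρ⁻¹ = ρ * ρ := inv_eq_of_mul_eq_one_left (by rw [← pow_three', hρ])
  have hττ : τ * τ = 1 := by
    rw [hτ]
    simp only [mul_assoc, inv_mul_cancel_left]
    rw [← mul_assoc σ σ, hσσ, one_mul, mul_inv_cancel]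
  have hconj : ρ * τ * ρ⁻¹ = τ * σ := by
    have h1 : σ * τ * (ρ * τ * ρ⁻¹) = 1 := by
      rw [← hσρ, hτ]
      have h3 : ρ⁻¹ * ρ⁻¹ = ρ := by
        rw [← mul_inv_rev, ← hρi, inv_inv]
      simp only [pow_three, mul_assoc, inv_mul_cancel_left, h3]
    rw [eq_inv_of_mul_eq_one_right h1, mul_inv_rev, hσi, inv_eq_of_mul_eq_one_left hττ]
  have hστ : σ * τ = τ * σ := by
    have h1 : (τ * σ) * (τ * σ) = 1 := by
      rw [← hconj]
      simp only [mul_assoc, inv_mul_cancel_left]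
      rw [← mul_assoc τ τ, hττ, one_mul, mul_inv_cancel]
    rw [← inv_eq_of_mul_eq_one_left h1, mul_inv_rev, hσi, inv_eq_of_mul_eq_one_left hττ]
  have hρτ : ρ * τ = τ * σ * ρ := by rw [← hconj]; group
  have hρσ : ρ * σ = τ * ρ := by rw [hτ]; group
  have hσρ1 : σ * ρ = ρ * (τ * σ) := by
    rw [← mul_assoc, hρτ, mul_assoc, hρσ, ← mul_assoc, mul_assoc τ, hστ, ← mul_assoc, hττ, one_mul]
  have hσρ2 : σ * (ρ * ρ) = ρ * (ρ * τ) := by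
    rw [hρτ, ← mul_assoc σ, hσρ1, mul_assoc]
  -- the operators on `V₀`
  set S := V0 ⟨σ, hσH⟩ with hS
  set T := V0 ⟨τ, hτH⟩ with hT
  set R : Module.End k (Fin n ⊕ Fin n → k) := Matrix.toLin' (rotationMatrix ζ n) with hRdef
  have hR3 : ∀ v, R (R (R v)) = v := by
    intro v
    simp only [hRdef, ← Matrix.toLin'_mul_apply, ← pow_three', ← mul_assoc]
    rw [rotationMatrix_pow_three hζ3, Matrix.toLin'_one, LinearMap.id_apply]
  have hQ := diagonal_mul_jordanBlock hζ3 n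
  have hRS : ∀ v, R (S v) = T (R v) := by
    intro v
    rw [hV0σ, hV0τ, hRdef, ← Matrix.toLin'_mul_apply, ← Matrix.toLin'_mul_apply,
      rotationMatrix_mul_unipotent]
    simp only [smul_mul_assoc, mul_smul_comm, mul_add, add_mul, mul_one, one_mul, hQ, smul_add,
      smul_smul]
    linear_combination (norm := module) hζ3 •
      (jordanBlock k n 0 * Matrix.diagonal fun i : Fin n => ζ ^ (2 * (i : ℕ)))
  have hRT : ∀ v, R (T v) = T (S (R v)) := by
    intro v
    rw [hV0σ, hV0τ, hRdef, ← Matrix.toLin'_mul_apply, ← Matrix.toLin'_mul_apply,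
      ← Matrix.toLin'_mul_apply, Matrix.fromBlocks_multiply]
    simp only [mul_one, mul_zero, zero_mul, add_zero, zero_add, one_mul]
    rw [rotationMatrix_mul_unipotent]
    simp only [smul_mul_assoc, mul_smul_comm, mul_add, add_mul, mul_one, one_mul, hQ, smul_add,
      smul_smul]
    linear_combination (norm := module) (hζ3 - hζs + h2) •
        (Matrix.diagonal fun i : Fin n => ζ ^ (2 * (i : ℕ))) +
      (hζs - h2 • (1 + ζ)) •
        (jordanBlock k n 0 * Matrix.diagonal fun i : Fin n => ζ ^ (2 * (i : ℕ)))
  have hU : ∀ a b w, U a (U b w) = U (a * b) w := fun a b w => by simp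
  have hιS : ∀ v, U σ (ι v) = ι (S v) := fun v => (hequiv ⟨σ, hσH⟩ v).symm
  have hιT : ∀ v, U τ (ι v) = ι (T v) := fun v => (hequiv ⟨τ, hτH⟩ v).symm
  -- the twisted embeddings intertwine
  let φ : Fin 3 → (Fin n ⊕ Fin n → k) →ₗ[k] W :=
    fun j => twistedEmbedding (U ρ) ι R (ζ ^ (j : ℕ))
  have hφσ : ∀ j v, U σ (φ j v) = φ j (S v) := by
    intro j v
    have a1 : ∀ v, U σ (U ρ (ι v)) = U ρ (ι (T (S v))) := fun v => by
      rw [hU, hσρ1, ← hU, ← hU, hιS, hιT]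
    have a2 : ∀ v, U σ (U ρ (U ρ (ι v))) = U ρ (U ρ (ι (T v))) := fun v => by
      rw [hU, hU, mul_assoc, hσρ2, ← hU, ← hU, hιT]
    simp only [φ, twistedEmbedding_apply, map_add, map_smul, a1, a2, hιS, hRS, hRT]
  have hφρ : ∀ j v, U ρ (φ j v) = φ j (ζ ^ (j : ℕ) • R v) := by
    intro j v
    have hc : (ζ ^ (j : ℕ)) ^ 3 = 1 := by rw [← pow_mul, mul_comm, pow_mul, hζ3, one_pow]
    have a1 : ∀ w, U ρ (U ρ (U ρ w)) = w := fun w => by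
      rw [hU, hU, ← pow_three', hρ, map_one, Module.End.one_apply]
    simp only [φ, twistedEmbedding_apply, map_add, map_smul, a1, hR3, smul_add, smul_smul]
    rw [← pow_succ', hc, one_smul, ← pow_two]
    abel
  let D : Fin 3 → (Fin n ⊕ Fin n → k) ≃ₗ[k] (Fin n ⊕ Fin n → k) := fun j =>
    LinearEquiv.smulOfNeZero k _ (ζ ^ (j : ℕ)) (pow_ne_zero _ (hζ.ne_zero (by norm_num)))
  let Re : (Fin n ⊕ Fin n → k) ≃ₗ[k] (Fin n ⊕ Fin n → k) :=
    LinearEquiv.ofLinearMap R (R ∘ₗ R) (LinearMap.ext hR3) (LinearMap.ext hR3)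
  have hφτ : ∀ j v, U τ (φ j v) = φ j (T v) := by
    intro j v
    obtain ⟨u, rfl⟩ := (Re.trans (D j)).surjective v
    have hu : (Re.trans (D j)) u = ζ ^ (j : ℕ) • R u := rfl
    rw [hu, ← hφρ, hU, ← hρσ, ← hU, hφσ, hφρ, hRS, map_smul T]
  have hφH : ∀ j (h : H) v, U h (φ j v) = φ j (V0 h v) := by
    intro j
    refine Representation.intertwines_of_closure U (φ j) hH V0 ?_
    rintro g hg (rfl | rfl) v
    · exact hφσ j v
    · exact hφτ j v
  -- the decomposition
  have hρinj : Function.Injective (U ρ) := fun a b hab => by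
    rw [← U.inv_self_apply ρ a, hab, U.inv_self_apply]
  obtain ⟨e₀, he₀⟩ := DirectSum.IsInternal.exists_equiv_of_range
    (fun i : Fin 3 => (U ρ ^ (i : ℕ)) ∘ₗ ι)
    (fun i => by
      rw [LinearMap.coe_comp, Module.End.coe_pow]
      exact (hρinj.iterate _).comp hinj)
    (by simpa only [LinearMap.range_comp] using hint)
  obtain ⟨e, he⟩ := exists_equiv_twistedEmbedding hζs (U ρ) ι R hR3 e₀ (fun f => by
    rw [he₀, Fin.sum_univ_three]
    simp [pow_two])
  have hφe : ∀ j v, e (Pi.single j v) = φ j v := by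
    intro j v
    rw [he, Finset.sum_eq_single j]
    · rw [Pi.single_eq_same]
    · intro i _ hi
      rw [Pi.single_eq_of_ne hi, map_zero]
    · simp
  have hφinj : ∀ j, Function.Injective (φ j) := fun j a b hab => by
    rw [← hφe, ← hφe] at hab
    exact Pi.single_injective j (e.injective hab)
  have hX : ∀ j, ∃ X : Representation k G (Fin n ⊕ Fin n → k),
      ∀ g v, U g (φ j v) = φ j (X g v) := by
    intro j
    refine U.exists_of_injective (φ j) (hφinj j) fun g => ?_
    have hs : ∀ g ∈ ({σ, ρ} : Set G), ∃ A : (Fin n ⊕ Fin n → k) ≃ₗ[k] (Fin n ⊕ Fin n → k),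
        ∀ v, U g (φ j v) = φ j (A v) := by
      rintro g (rfl | rfl)
      · refine ⟨LinearEquiv.ofLinearMap S S ?_ ?_, hφσ j⟩ <;>
        · rw [hS, ← Module.End.mul_eq_comp, ← map_mul, ← Module.End.one_eq_id, ← map_one V0]
          exact congrArg V0 (Subtype.ext hσσ)
      · exact ⟨Re.trans (D j), hφρ j⟩
    obtain ⟨A, hA⟩ := U.exists_equiv_of_closure (φ j) hs
      (show g ∈ Subgroup.closure {σ, ρ} by rw [hgen]; trivial)
    exact ⟨A, hA⟩
  choose X hX using hX
  refine ⟨X, ⟨e.symm, fun g w i => ?_⟩, fun i => ⟨LinearEquiv.refl k _, fun h v => ?_⟩⟩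
  · obtain ⟨f, rfl⟩ := e.surjective w
    have : U g (e f) = e (fun j => X j g (f j)) := by
      rw [he, he, map_sum]
      exact Finset.sum_congr rfl fun j _ => hX j g (f j)
    rw [this, e.symm_apply_apply, e.symm_apply_apply]
  · apply hφinj i
    exact (hX i h v).symm.trans (hφH i h v)
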